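/- arXiv:2409.19129 — 2 statements merged into one kernel-verified Lean document; each statement's English description precedes it below -/
import Mathlib

section
/- Let $(V_1,\ldots,V_K)$ be a partition of $[n]$ and let $f_{ij} \ge 0$ be symmetric edge weights. Let $L_n$ be the Laplacian on $[n]$, $L_{V_k}$ the Laplacian of the induced subgraph on $V_k$, and $T_K$ the Laplacian on $K$ super-nodes with weights $\tau_{st} = \sum_{i\in V_s}\sum_{j\in V_t} f_{ij}$ for $s \ne t$. Then $\det(L_n[1]) \ge \det(T_K[1]) \cdot \prod_{k=1}^K \det(L_{V_k}[1])$. -/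
open Matrix Finset

/-- The weighted-graph Laplacian on `Fin n` with edge weights `f`. -/
def lap {n : ℕ} (f : Fin n → Fin n → ℝ) : Matrix (Fin n) (Fin n) ℝ :=
  Matrix.of fun s t =>
    if s = t then ∑ u ∈ Finset.univ.erase s, f s u else -(f s t)

/-- The Laplacian of the induced weighted subgraph on `S`, with the row and column of
the chosen vertex `i` deleted (entries still refer to the Laplacian on `S`). -/
def lapMinor {n : ℕ} (f : Fin n → Fin n → ℝ) (S : Finset (Fin n)) (i : Fin n) :
    Matrix {x : Fin n // x ∈ S.erase i} {x : Fin n // x ∈ S.erase i} ℝ :=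
  Matrix.of fun a b =>
    if (a : Fin n) = (b : Fin n) then ∑ u ∈ S.erase (a : Fin n), f a u
    else -(f a b)

/-!
Instead of counting spanning trees, one compares determinants of positive semidefinite matrices.
Grounding a Laplacian, i.e. adding `1` at one diagonal entry, turns its determinant into that of the
reduced Laplacian. Split the Laplacian as `H + N`, with `H` coming from the edges within blocks and
`N` from the edges across blocks, the latter grounded at one root. Pass to the basis formed by the
block indicators and the vertices that are not roots. Since `H` kills the indicators, it becomes
`diag(0, B)`, where `det B` is the product of the reduced determinants of the blocks, while the
leading block `A` of `N` is the grounded Laplacian on the super-nodes. The Schur complement of `A`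
in `H + N` is `B` plus the positive semidefinite Schur complement of `A` in `N`, so
`det (H + N) ≥ det A * det B`.
-/

section PosSemidef

open scoped ComplexOrder

variable {m n 𝕜 : Type*} [Fintype m] [Fintype n] [DecidableEq m] [DecidableEq n] [RCLike 𝕜]

theorem one_le_det_one_add {X : Matrix n n 𝕜} (hX : X.PosSemidef) : 1 ≤ (1 + X).det := by
  have hdet : (1 + X).det = ∏ i, (1 + (hX.1.eigenvalues i : 𝕜)) := by
    conv_lhs => rw [hX.1.spectral_theorem]
    rw [Unitary.conjStarAlgAut_apply, Matrix.mul_assoc, det_one_add_mul_comm, Matrix.mul_assoc,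
      Unitary.coe_star_mul_self, Matrix.mul_one, ← diagonal_one, diagonal_add, det_diagonal]
    rfl
  rw [hdet]
  exact Finset.one_le_prod fun i _ =>
    le_add_of_nonneg_right (RCLike.ofReal_nonneg.mpr (hX.eigenvalues_nonneg i))

open scoped MatrixOrder in
theorem det_le_det_add {A B : Matrix n n 𝕜} (hA : A.PosSemidef) (hB : B.PosSemidef) :
    A.det ≤ (A + B).det := by
  by_cases hA0 : A.det = 0
  · rw [hA0]
    exact (hA.add hB).det_nonneg
  obtain ⟨R, rfl⟩ := CStarAlgebra.nonneg_iff_eq_star_mul_self.mp hB.nonneg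
  rw [star_eq_conjTranspose, det_add_mul _ _ (isUnit_iff_ne_zero.mpr hA0)]
  exact le_mul_of_one_le_right hA.det_nonneg
    (one_le_det_one_add (hA.inv.mul_mul_conjTranspose_same R))

theorem det_mul_det_le_det_fromBlocks {A : Matrix m m 𝕜} {C : Matrix m n 𝕜} {D B : Matrix n n 𝕜}
    {C' : Matrix n m 𝕜} (hN : (fromBlocks A C C' D).PosSemidef) (hB : B.PosSemidef) :
    A.det * B.det ≤ (fromBlocks A C C' (B + D)).det := by
  obtain rfl : Cᴴ = C' := (isHermitian_fromBlocks_iff.mp hN.1).2.1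
  have hA : A.PosSemidef := hN.submatrix Sum.inl
  by_cases hA0 : A.det = 0
  · have hsum : (fromBlocks A C Cᴴ (B + D)).PosSemidef := by
      have h := (hB.conjTranspose_mul_mul_same (fromCols (0 : Matrix n m 𝕜) 1)).add hN
      rw [conjTranspose_fromCols_eq_fromRows_conjTranspose, fromRows_mul, fromRows_mul_fromCols,
        fromBlocks_add] at h
      simpa using h
    rw [hA0, zero_mul]
    exact hsum.det_nonneg
  · have hApos : A.PosDef := hA.posDef_iff_det_ne_zero.mpr hA0
    have := hApos.isUnit.invertible
    have hschur := (PosDef.fromBlocks₁₁ C D hApos).mp hN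
    rw [det_fromBlocks₁₁, invOf_eq_nonsing_inv, add_sub_assoc]
    exact mul_le_mul_of_nonneg_left (det_le_det_add hB hschur) hA.det_nonneg

end PosSemidef

section Cofactors

variable {n R : Type*} [Fintype n] [DecidableEq n] [CommRing R]

theorem adjugate_apply_self (A : Matrix n n R) (a : n) :
    A.adjugate a a = (A.toSquareBlockProp (· ≠ a)).det := by
  have hrow : ∀ i, i = a → ∀ j, ¬j = a → A.updateRow a (Pi.single a 1) i j = 0 := by
    rintro _ rfl j hj
    simp [hj]
  have hminor : (A.updateRow a (Pi.single a 1)).toSquareBlockProp (· ≠ a) =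
      A.toSquareBlockProp (· ≠ a) := by
    ext i j
    simp [toSquareBlockProp_def, updateRow_ne i.2]
  have hcorner : ∀ _ : Fintype {i // i = a},
      ((A.updateRow a (Pi.single a 1)).toSquareBlockProp (· = a)).det = 1 := fun _ =>
    (det_eq_elem_of_subsingleton _ ⟨a, rfl⟩).trans (by simp [toSquareBlockProp_def])
  rw [adjugate_apply, twoBlockTriangular_det' _ (· = a) hrow, hcorner, one_mul]
  exact congrArg det hminor

theorem det_add_single_one (A : Matrix n n R) (a : n) :
    (A + single a a 1).det = A.det + A.adjugate a a := by
  have hupdate : A + single a a 1 = A.updateRow a (A a + Pi.single a 1) := by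
    ext i j
    by_cases hi : i = a
    · subst hi
      simp [single_apply, Pi.single_apply, eq_comm]
    · simp [updateRow_apply, hi, Ne.symm hi]
  rw [hupdate, det_updateRow_add, updateRow_eq_self, adjugate_apply]

theorem det_eq_zero_of_mulVec_one_eq_zero [Nonempty n] {A : Matrix n n R} (hA : A *ᵥ 1 = 0) :
    A.det = 0 :=
  det_eq_zero_of_mulVec_eq_zero_of_mem_nonZeroDivisors hA (i := Classical.arbitrary n)
    (one_mem _)

theorem adjugate_apply_left_eq {A : Matrix n n R} (hA : A *ᵥ 1 = 0) (i i' j : n) :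
    A.adjugate i j = A.adjugate i' j := by
  have : Nonempty n := ⟨j⟩
  have hdiff : (A.updateRow j (Pi.single i 1 - Pi.single i' 1)).det = 0 := by
    refine det_eq_zero_of_mulVec_one_eq_zero (funext fun k => ?_)
    by_cases hk : k = j
    · subst hk
      simp [mulVec, dotProduct]
    · simpa [mulVec, dotProduct, updateRow_apply, hk] using congrFun hA k
  rw [adjugate_apply, adjugate_apply, ← sub_add_cancel (Pi.single i 1 : n → R) (Pi.single i' 1),
    det_updateRow_add, hdiff, zero_add]

theorem adjugate_apply_eq {A : Matrix n n R} (hrow : A *ᵥ 1 = 0) (hcol : 1 ᵥ* A = 0)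
    (i i' j j' : n) : A.adjugate i j = A.adjugate i' j' := by
  have hright : A.adjugate i' j = A.adjugate i' j' := by
    have h := adjugate_apply_left_eq ((mulVec_transpose A 1).trans hcol) j j' i'
    rwa [← adjugate_transpose] at h
  rw [adjugate_apply_left_eq hrow i i' j, hright]

end Cofactors

section Laplacian

variable {V R : Type*} [Fintype V] [DecidableEq V] [CommRing R]

/-- The Laplacian of the weighted graph on `V` with edge weights `W`. The diagonal of `W` cancels,
so loops have no effect. -/
def weightedLaplacian (W : Matrix V V R) : Matrix V V R :=
  diagonal (W *ᵥ 1) - W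

/-- The Laplacian with the row and column of the vertex `a` deleted. By Kirchhoff's theorem its
determinant is the weighted count of spanning trees, whichever `a` is chosen. -/
def reducedLaplacian (W : Matrix V V R) (a : V) : Matrix {i // i ≠ a} {i // i ≠ a} R :=
  (weightedLaplacian W).toSquareBlockProp (· ≠ a)

theorem weightedLaplacian_add (W W' : Matrix V V R) :
    weightedLaplacian (W + W') = weightedLaplacian W + weightedLaplacian W' := by
  rw [weightedLaplacian, weightedLaplacian, weightedLaplacian, sub_add_sub_comm, diagonal_add,
    add_mulVec]
  rfl

theorem weightedLaplacian_mulVec_apply (W : Matrix V V R) (x : V → R) (i : V) :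
    (weightedLaplacian W *ᵥ x) i = ∑ j, W i j * (x i - x j) := by
  rw [weightedLaplacian, sub_mulVec, Pi.sub_apply, mulVec_diagonal]
  simp only [mulVec, dotProduct, Pi.one_apply, mul_one, Finset.sum_mul, mul_sub,
    Finset.sum_sub_distrib]

theorem weightedLaplacian_mulVec_one (W : Matrix V V R) : weightedLaplacian W *ᵥ 1 = 0 := by
  ext i
  simp [weightedLaplacian_mulVec_apply]

theorem det_weightedLaplacian_add_single (W : Matrix V V R) (a : V) :
    (weightedLaplacian W + single a a 1).det = (reducedLaplacian W a).det := by
  have : Nonempty V := ⟨a⟩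
  rw [det_add_single_one, det_eq_zero_of_mulVec_one_eq_zero (weightedLaplacian_mulVec_one W),
    zero_add, adjugate_apply_self, reducedLaplacian]

theorem det_reducedLaplacian_eq [StarRing R] {W : Matrix V V R}
    (hW : (weightedLaplacian W).IsHermitian) (a b : V) :
    (reducedLaplacian W a).det = (reducedLaplacian W b).det := by
  have hrow := weightedLaplacian_mulVec_one W
  have hcol : 1 ᵥ* weightedLaplacian W = 0 := by
    simpa [star_mulVec, hW.eq] using congrArg star hrow
  rw [reducedLaplacian, reducedLaplacian, ← adjugate_apply_self, ← adjugate_apply_self,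
    adjugate_apply_eq hrow hcol]

theorem two_mul_dotProduct_weightedLaplacian_mulVec {W : Matrix V V R} (hW : W.IsSymm)
    (x : V → R) :
    2 * (x ⬝ᵥ weightedLaplacian W *ᵥ x) = ∑ i, ∑ j, W i j * (x i - x j) ^ 2 := by
  have hdot : x ⬝ᵥ weightedLaplacian W *ᵥ x = ∑ i, ∑ j, W i j * (x i * (x i - x j)) := by
    simp only [dotProduct, weightedLaplacian_mulVec_apply, Finset.mul_sum, mul_left_comm]
  have hswap : x ⬝ᵥ weightedLaplacian W *ᵥ x = ∑ i, ∑ j, W i j * (x j * (x j - x i)) := by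
    rw [hdot, Finset.sum_comm]
    simp only [hW.apply]
  rw [two_mul]
  nth_rw 1 [hdot]
  rw [hswap]
  simp only [← Finset.sum_add_distrib]
  exact Finset.sum_congr rfl fun i _ => Finset.sum_congr rfl fun j _ => by ring

theorem posSemidef_weightedLaplacian {W : Matrix V V ℝ} (hW : W.IsSymm)
    (hnn : ∀ i j, 0 ≤ W i j) : (weightedLaplacian W).PosSemidef := by
  refine .of_dotProduct_mulVec_nonneg ?_ fun x => ?_
  · exact (isHermitian_diagonal _).sub ((conjTranspose_eq_transpose_of_trivial W).trans hW)
  · have hquad := two_mul_dotProduct_weightedLaplacian_mulVec hW x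
    have hnonneg : 0 ≤ ∑ i, ∑ j, W i j * (x i - x j) ^ 2 :=
      Finset.sum_nonneg fun i _ => Finset.sum_nonneg fun j _ => mul_nonneg (hnn i j) (sq_nonneg _)
    rw [star_trivial]
    linarith

end Laplacian

section Partition

variable {V κ R : Type*} [DecidableEq κ] (c : V → κ)

/-- The matrix whose columns are the indicator vectors of the blocks `c ⁻¹' {k}`. -/
def blockIndicator (R : Type*) [CommRing R] : Matrix V κ R :=
  (1 : Matrix κ κ R).submatrix c id

/-- The edge weights with every edge joining two different blocks removed. -/
def withinBlocks [Zero R] (W : Matrix V V R) : Matrix V V R :=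
  of fun i j => if c i = c j then W i j else 0

/-- The edge weights with every edge inside a block removed. -/
def acrossBlocks [Zero R] (W : Matrix V V R) : Matrix V V R :=
  of fun i j => if c i = c j then 0 else W i j

/-- The edge weights on the super-nodes obtained by contracting each block to a point. The diagonal
collects the weights inside the blocks, which the Laplacian ignores. -/
def supernodeWeights [Fintype V] [AddCommMonoid R] (W : Matrix V V R) : Matrix κ κ R :=
  of fun s t => ∑ i with c i = s, ∑ j with c j = t, W i j

variable [CommRing R]

theorem withinBlocks_add_acrossBlocks (W : Matrix V V R) :
    withinBlocks c W + acrossBlocks c W = W := by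
  ext i j
  by_cases h : c i = c j <;> simp [withinBlocks, acrossBlocks, h]

theorem blockIndicator_mulVec_one [Fintype κ] : blockIndicator c R *ᵥ 1 = 1 := by
  ext i
  simp [blockIndicator, mulVec, dotProduct, one_apply]

theorem conjTranspose_blockIndicator [StarRing R] :
    (blockIndicator c R)ᴴ = (blockIndicator c R)ᵀ := by
  rw [blockIndicator, conjTranspose_submatrix, conjTranspose_one, transpose_submatrix,
    transpose_one]

variable [Fintype V]

theorem mul_blockIndicator_apply {m : Type*} (M : Matrix m V R) (i : m) (k : κ) :
    (M * blockIndicator c R) i k = ∑ j with c j = k, M i j := by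
  simp [mul_apply, blockIndicator, one_apply, Finset.sum_filter]

theorem transpose_blockIndicator_mul_apply {m : Type*} (M : Matrix V m R) (k : κ) (j : m) :
    ((blockIndicator c R)ᵀ * M) k j = ∑ i with c i = k, M i j := by
  simp [mul_apply, blockIndicator, one_apply, Finset.sum_filter, eq_comm (a := k)]

theorem transpose_blockIndicator_mul_mul (W : Matrix V V R) :
    (blockIndicator c R)ᵀ * W * blockIndicator c R = supernodeWeights c W := by
  ext s t
  simp only [mul_blockIndicator_apply, transpose_blockIndicator_mul_apply, supernodeWeights,
    of_apply]
  exact Finset.sum_comm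

theorem transpose_blockIndicator_mul_single_mul [DecidableEq V] (i j : V) :
    (blockIndicator c R)ᵀ * single i j (1 : R) * blockIndicator c R = single (c i) (c j) 1 := by
  rw [single_eq_single_vecMulVec_single, Matrix.mul_vecMulVec, Matrix.vecMulVec_mul]
  ext s t
  simp [vecMulVec_apply, blockIndicator, one_apply, single_apply, ← ite_and, eq_comm (a := s),
    and_comm]

theorem transpose_blockIndicator_mul_diagonal_mul [DecidableEq V] (d : V → R) :
    (blockIndicator c R)ᵀ * diagonal d * blockIndicator c R =
      diagonal ((blockIndicator c R)ᵀ *ᵥ d) := by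
  ext s t
  rw [mul_blockIndicator_apply]
  simp only [mul_diagonal]
  by_cases h : s = t
  · subst h
    simp +contextual [blockIndicator, one_apply, mulVec, dotProduct, Finset.sum_filter,
      eq_comm (a := s)]
  · rw [diagonal_apply_ne _ h]
    refine Finset.sum_eq_zero fun i hi => ?_
    have hi : c i ≠ s := (Finset.mem_filter.mp hi).2.trans_ne (Ne.symm h)
    simp [blockIndicator, one_apply, hi]

theorem transpose_blockIndicator_mul_weightedLaplacian_mul [DecidableEq V] [Fintype κ]
    (W : Matrix V V R) :
    (blockIndicator c R)ᵀ * weightedLaplacian W * blockIndicator c R =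
      weightedLaplacian (supernodeWeights c W) := by
  rw [weightedLaplacian, Matrix.mul_sub, Matrix.sub_mul,
    transpose_blockIndicator_mul_diagonal_mul, weightedLaplacian,
    ← transpose_blockIndicator_mul_mul, ← mulVec_mulVec, blockIndicator_mulVec_one, mulVec_mulVec]

theorem weightedLaplacian_withinBlocks_mul_blockIndicator [DecidableEq V] (W : Matrix V V R) :
    weightedLaplacian (withinBlocks c W) * blockIndicator c R = 0 := by
  ext i k
  refine (weightedLaplacian_mulVec_apply _ (fun j => blockIndicator c R j k) i).trans
    (Finset.sum_eq_zero fun j _ => ?_)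
  by_cases h : c i = c j <;> simp [withinBlocks, blockIndicator, one_apply, h]

theorem toSquareBlock_weightedLaplacian_withinBlocks [DecidableEq V] (W : Matrix V V R) (k : κ) :
    (weightedLaplacian (withinBlocks c W)).toSquareBlock c k =
      weightedLaplacian (W.toSquareBlock c k) := by
  have hwithin : (withinBlocks c W).toSquareBlock c k = W.toSquareBlock c k := by
    ext i j
    simp [toSquareBlock_def, withinBlocks, i.2, j.2]
  have hdegree : ∀ i : {i // c i = k},
      (withinBlocks c W *ᵥ 1) i = (W.toSquareBlock c k *ᵥ 1) i := fun i => by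
    simp only [mulVec, dotProduct, withinBlocks, toSquareBlock_def, of_apply, Pi.one_apply, mul_one,
      i.2, eq_comm (a := k), ← Finset.sum_filter]
    exact Finset.sum_subtype _ (by simp) _
  ext i j
  have hij := congrFun₂ hwithin i j
  simp only [toSquareBlock_def, of_apply] at hij
  simp [weightedLaplacian, toSquareBlock_def, diagonal_apply, hdegree, hij, Subtype.ext_iff]

theorem det_eq_prod_det_toSquareBlock [DecidableEq V] [Fintype κ] {M : Matrix V V R}
    (hM : ∀ i j, c i ≠ c j → M i j = 0) : M.det = ∏ k, (M.toSquareBlock c k).det := by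
  let : LinearOrder κ := .lift' _ (Fintype.equivFin κ).injective
  exact BlockTriangular.det_fintype fun i j hij => hM i j hij.ne'

theorem posSemidef_weightedLaplacian_withinBlocks [DecidableEq V] {W : Matrix V V ℝ}
    (hW : W.IsSymm) (hnn : ∀ i j, 0 ≤ W i j) :
    (weightedLaplacian (withinBlocks c W)).PosSemidef := by
  refine posSemidef_weightedLaplacian (.ext fun i j => ?_) fun i j => ?_
  · simp [withinBlocks, eq_comm (a := c i), hW.apply]
  · by_cases h : c i = c j <;> simp [withinBlocks, h, hnn i j]

theorem posSemidef_weightedLaplacian_acrossBlocks [DecidableEq V] {W : Matrix V V ℝ}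
    (hW : W.IsSymm) (hnn : ∀ i j, 0 ≤ W i j) :
    (weightedLaplacian (acrossBlocks c W)).PosSemidef := by
  refine posSemidef_weightedLaplacian (.ext fun i j => ?_) fun i j => ?_
  · simp [acrossBlocks, eq_comm (a := c i), hW.apply]
  · by_cases h : c i = c j <;> simp [acrossBlocks, h, hnn i j]

theorem exists_eq_filter_of_partition {S : κ → Finset V}
    (hdisj : Pairwise (Function.onFun Disjoint S)) (hcover : ∀ i, ∃ k, i ∈ S k) :
    ∃ c : V → κ, S = fun k => ({i | c i = k} : Finset V) := by
  choose c hc using hcover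
  refine ⟨c, funext fun k => Finset.ext fun i => ?_⟩
  rw [mem_filter_univ]
  refine ⟨fun hi => ?_, fun hi => hi ▸ hc i⟩
  exact hdisj.eq (Finset.not_disjoint_iff.mpr ⟨i, hc i, hi⟩)

end Partition

section AdaptedBasis

variable {V κ R : Type*} [DecidableEq V] (c : V → κ) (r : κ → V)

/-- The diagonal 0-1 matrix supported on the roots `r k`. Adding it to the Laplacian within the
blocks grounds each block at its root. -/
def rootProjection (R : Type*) [CommRing R] : Matrix V V R :=
  diagonal fun i => if r (c i) = i then 1 else 0

/-- A basis in which a Hermitian form with the block indicators in its kernel lives on the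
non-roots. The basis vectors, as columns, are the block indicators followed by the standard basis
vectors at the vertices that are not the root `r k` of their block. -/
def adaptedBasis [DecidableEq κ] (R : Type*) [CommRing R] : Matrix V (κ ⊕ {i // r (c i) ≠ i}) R :=
  fromCols (blockIndicator c R) ((1 : Matrix V V R).submatrix id Subtype.val)

variable {c r}

/-- The vertices as roots, one for each block, together with non-roots. It makes `adaptedBasis` a
square matrix with rows and columns indexed by the same type. -/
def rootSumNonrootEquiv (hr : Function.LeftInverse c r) : κ ⊕ {i // r (c i) ≠ i} ≃ V where
  toFun := Sum.elim r Subtype.val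
  invFun i := if h : r (c i) = i then .inl (c i) else .inr ⟨i, h⟩
  left_inv := by
    rintro (k | ⟨i, hi⟩)
    · simp [hr k]
    · simp [hi]
  right_inv i := by
    by_cases h : r (c i) = i <;> simp [h]

variable [CommRing R]

theorem toSquareBlock_rootProjection (hr : Function.LeftInverse c r) (k : κ) :
    (rootProjection c r R).toSquareBlock c k = single ⟨r k, hr k⟩ ⟨r k, hr k⟩ 1 := by
  ext i j
  have hij : (i : V) = j ∧ r k = i ↔ r k = i ∧ r k = j :=
    ⟨fun h => ⟨h.2, h.2.trans h.1⟩, fun h => ⟨h.1.symm.trans h.2, h.1⟩⟩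
  simp [toSquareBlock_def, rootProjection, diagonal_apply, single_apply, i.2, Subtype.ext_iff,
    ← ite_and, hij]

variable [DecidableEq κ]

theorem conjTranspose_adaptedBasis [StarRing R] :
    (adaptedBasis c r R)ᴴ = (adaptedBasis c r R)ᵀ := by
  rw [adaptedBasis, conjTranspose_fromCols_eq_fromRows_conjTranspose, transpose_fromCols,
    conjTranspose_blockIndicator, conjTranspose_submatrix, conjTranspose_one, transpose_submatrix,
    transpose_one]

variable [Fintype V]

theorem transpose_adaptedBasis_mul_mul (M : Matrix V V R) :
    (adaptedBasis c r R)ᵀ * M * adaptedBasis c r R =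
      fromBlocks ((blockIndicator c R)ᵀ * M * blockIndicator c R)
        (((blockIndicator c R)ᵀ * M).submatrix id Subtype.val)
        ((M * blockIndicator c R).submatrix Subtype.val id)
        (M.submatrix Subtype.val Subtype.val) := by
  rw [adaptedBasis, transpose_fromCols, fromRows_mul, fromRows_mul_fromCols]
  congr 1 <;> ext i j <;> simp [mul_apply, one_apply]

theorem transpose_adaptedBasis_mul_rootProjection_mul (hr : Function.LeftInverse c r) :
    (adaptedBasis c r R)ᵀ * rootProjection c r R * adaptedBasis c r R = fromBlocks 1 0 0 0 := by
  rw [transpose_adaptedBasis_mul_mul, rootProjection]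
  congr 1
  · rw [transpose_blockIndicator_mul_diagonal_mul, ← diagonal_one]
    congr 1
    ext k
    have hroot : ∀ i, r (c i) = i ∧ c i = k ↔ i = r k := by
      refine fun i => ⟨?_, ?_⟩
      · rintro ⟨hi, rfl⟩
        exact hi.symm
      · rintro rfl
        exact ⟨congrArg r (hr k), hr k⟩
    simp [mulVec, dotProduct, blockIndicator, one_apply, ← ite_and, hroot]
  · ext k i
    simp [i.2]
  · ext i k
    simp [i.2]
  · ext i j
    simp [diagonal_apply, i.2]

variable [Fintype κ]

theorem det_transpose_adaptedBasis_mul_mul (hr : Function.LeftInverse c r) (M : Matrix V V R) :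
    ((adaptedBasis c r R)ᵀ * M * adaptedBasis c r R).det = M.det := by
  set e := rootSumNonrootEquiv hr
  set Q := (adaptedBasis c r R).submatrix e id with hQ
  have hQblocks : Q = fromBlocks 1 0 ((blockIndicator c R).submatrix Subtype.val id) 1 := by
    ext (k | i) (l | j)
    · simp [hQ, e, rootSumNonrootEquiv, adaptedBasis, blockIndicator, one_apply, hr k]
    · have hne : r k ≠ j := fun h => j.2 (by rw [← h, hr k])
      simp [hQ, e, rootSumNonrootEquiv, adaptedBasis, hne]
    · simp [hQ, e, rootSumNonrootEquiv, adaptedBasis]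
    · simp [hQ, e, rootSumNonrootEquiv, adaptedBasis, one_apply, Subtype.ext_iff]
  have hQdet : Q.det = 1 := by
    rw [hQblocks, det_fromBlocks_zero₁₂, det_one, det_one, one_mul]
  have hconj : (adaptedBasis c r R)ᵀ * M * adaptedBasis c r R = Qᵀ * M.submatrix e e * Q := by
    rw [hQ, transpose_submatrix, submatrix_mul_equiv, submatrix_mul_equiv, submatrix_id_id]
  rw [hconj, det_mul, det_mul, det_transpose, hQdet, det_submatrix_equiv_self, one_mul, mul_one]

theorem det_weightedLaplacian_withinBlocks_add_rootProjection (hr : Function.LeftInverse c r)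
    (W : Matrix V V R) :
    (weightedLaplacian (withinBlocks c W) + rootProjection c r R).det =
      ∏ k, (reducedLaplacian (W.toSquareBlock c k) ⟨r k, hr k⟩).det := by
  have hblock : ∀ i j, c i ≠ c j →
      (weightedLaplacian (withinBlocks c W) + rootProjection c r R) i j = 0 := fun i j hij => by
    simp [weightedLaplacian, withinBlocks, rootProjection, hij, ne_of_apply_ne c hij]
  rw [det_eq_prod_det_toSquareBlock c hblock]
  refine Finset.prod_congr rfl fun k _ => ?_
  rw [← det_weightedLaplacian_add_single, ← toSquareBlock_weightedLaplacian_withinBlocks,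
    ← toSquareBlock_rootProjection hr]
  rfl

end AdaptedBasis

section Inequality

open scoped ComplexOrder

variable {V κ 𝕜 : Type*} [Fintype V] [DecidableEq V] [Fintype κ] [DecidableEq κ] [RCLike 𝕜]
  {c : V → κ} {r : κ → V}

theorem det_mul_det_add_rootProjection_le_det_add (hr : Function.LeftInverse c r)
    {H N : Matrix V V 𝕜} (hH : H.PosSemidef) (hN : N.PosSemidef)
    (hker : H * blockIndicator c 𝕜 = 0) :
    ((blockIndicator c 𝕜)ᵀ * N * blockIndicator c 𝕜).det * (H + rootProjection c r 𝕜).det ≤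
      (H + N).det := by
  have hkerT : (blockIndicator c 𝕜)ᵀ * H = 0 := by
    rw [← conjTranspose_blockIndicator, ← hH.isHermitian.eq, ← conjTranspose_mul, hker,
      conjTranspose_zero]
  have hQH : (adaptedBasis c r 𝕜)ᵀ * H * adaptedBasis c r 𝕜 =
      fromBlocks 0 0 0 (H.submatrix Subtype.val Subtype.val) := by
    simp [transpose_adaptedBasis_mul_mul, hker, hkerT]
  have hQN := hN.conjTranspose_mul_mul_same (adaptedBasis c r 𝕜)
  rw [conjTranspose_adaptedBasis, transpose_adaptedBasis_mul_mul] at hQN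
  have hHR : (H + rootProjection c r 𝕜).det =
      (H.submatrix Subtype.val Subtype.val : Matrix {i // r (c i) ≠ i} _ 𝕜).det := by
    rw [← det_transpose_adaptedBasis_mul_mul hr, Matrix.mul_add, Matrix.add_mul, hQH,
      transpose_adaptedBasis_mul_rootProjection_mul hr, fromBlocks_add]
    simp
  rw [hHR, ← det_transpose_adaptedBasis_mul_mul hr (H + N), Matrix.mul_add, Matrix.add_mul, hQH,
    transpose_adaptedBasis_mul_mul N, fromBlocks_add, zero_add, zero_add, zero_add]
  exact det_mul_det_le_det_fromBlocks hQN (hH.submatrix _)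

theorem det_minor_ge_supernode_mul_blocks_general (W : Matrix V V 𝕜)
    (hwithin : (weightedLaplacian (withinBlocks c W)).PosSemidef)
    (hacross : (weightedLaplacian (acrossBlocks c W)).PosSemidef)
    (hr : Function.LeftInverse c r) (k₀ : κ) (a : V) :
    (reducedLaplacian (supernodeWeights c W) k₀).det *
        ∏ k, (reducedLaplacian (W.toSquareBlock c k) ⟨r k, hr k⟩).det ≤
      (reducedLaplacian W a).det := by
  have hsplit : weightedLaplacian W =
      weightedLaplacian (withinBlocks c W) + weightedLaplacian (acrossBlocks c W) := by
    rw [← weightedLaplacian_add, withinBlocks_add_acrossBlocks]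
  have hsymm : (weightedLaplacian W).IsHermitian := hsplit ▸ (hwithin.add hacross).isHermitian
  have hker := weightedLaplacian_withinBlocks_mul_blockIndicator c W
  have hgrounded : (weightedLaplacian (acrossBlocks c W) + single (r k₀) (r k₀) 1).PosSemidef := by
    refine hacross.add ?_
    rw [← diagonal_single]
    exact .diagonal (Pi.single_nonneg.mpr zero_le_one)
  have hquot : (blockIndicator c 𝕜)ᵀ *
      (weightedLaplacian (acrossBlocks c W) + single (r k₀) (r k₀) 1) * blockIndicator c 𝕜 =
        weightedLaplacian (supernodeWeights c W) + single k₀ k₀ 1 := by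
    rw [Matrix.mul_add, Matrix.add_mul, transpose_blockIndicator_mul_single_mul, hr k₀,
      ← transpose_blockIndicator_mul_weightedLaplacian_mul, hsplit, Matrix.mul_add (_ᵀ),
      Matrix.add_mul, Matrix.mul_assoc _ (weightedLaplacian (withinBlocks c W)), hker,
      Matrix.mul_zero, zero_add]
  rw [det_reducedLaplacian_eq hsymm a (r k₀), ← det_weightedLaplacian_add_single W, hsplit,
    add_assoc, ← det_weightedLaplacian_add_single, ← hquot,
    ← det_weightedLaplacian_withinBlocks_add_rootProjection hr]
  exact det_mul_det_add_rootProjection_le_det_add hr hwithin hgrounded hker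

end Inequality

section FinLaplacian

theorem lap_eq_weightedLaplacian {n : ℕ} (f : Fin n → Fin n → ℝ) :
    lap f = weightedLaplacian (of f) := by
  ext s t
  by_cases h : s = t
  · subst h
    simp [lap, weightedLaplacian, mulVec, dotProduct, Finset.sum_erase_eq_sub]
  · simp [lap, weightedLaplacian, h]

theorem det_lap_submatrix_succ {n : ℕ} (f : Fin (n + 1) → Fin (n + 1) → ℝ) :
    ((lap f).submatrix Fin.succ Fin.succ).det = (reducedLaplacian (of f) 0).det := by
  rw [lap_eq_weightedLaplacian, ← det_submatrix_equiv_self (finSuccAboveEquiv 0)]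
  rfl

theorem det_lapMinor_filter_eq {n : ℕ} {κ : Type*} [DecidableEq κ] (f : Fin n → Fin n → ℝ)
    {c : Fin n → κ} {k : κ} {a : Fin n} (ha : c a = k) :
    (lapMinor f {i | c i = k} a).det =
      (reducedLaplacian ((of f).toSquareBlock c k) ⟨a, ha⟩).det := by
  have hmem : ∀ x, x ∈ ({i | c i = k} : Finset (Fin n)).erase a ↔ x ≠ a ∧ c x = k := by simp
  let e : {x // x ∈ ({i | c i = k} : Finset (Fin n)).erase a} ≃
      {y : {i // c i = k} // y ≠ ⟨a, ha⟩} :=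
    { toFun x := ⟨⟨x, ((hmem x).mp x.2).2⟩, fun h => ((hmem x).mp x.2).1 (congrArg Subtype.val h)⟩
      invFun y := ⟨y, (hmem y).mpr ⟨fun h => y.2 (Subtype.ext h), y.1.2⟩⟩ }
  rw [← det_submatrix_equiv_self e]
  congr 1
  have hdegree : ∀ i, c i = k → ∑ u ∈ ({i | c i = k} : Finset (Fin n)).erase i, f i u =
      ∑ u : {u // c u = k}, f i u - f i i := fun i hi => by
    rw [Finset.sum_erase_eq_sub (by simpa using hi)]
    exact congrArg (· - f i i) (Finset.sum_subtype _ (by simp) _)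
  ext i j
  by_cases hij : i = j
  · subst hij
    simp [lapMinor, e, reducedLaplacian, toSquareBlockProp_def, toSquareBlock_def,
      weightedLaplacian, mulVec, dotProduct, hdegree i ((hmem i).mp i.2).2]
  · simp [lapMinor, e, reducedLaplacian, toSquareBlockProp_def, toSquareBlock_def,
      weightedLaplacian, Subtype.coe_ne_coe.mpr hij, hij]

end FinLaplacian

/-- for a partition `(V k)` of the vertex set with symmetric nonnegative
weights `f`, letting `T` be the Laplacian on the super-nodes with weights
`τ s t = ∑_{i ∈ V s} ∑_{j ∈ V t} f i j`, one has
`det (Lₙ[1]) ≥ det (T[1]) * ∏ k det (L_{V k}[rₖ])`. -/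
theorem det_minor_ge_supernode_mul_blocks {n K : ℕ}
    (f : Fin (n + 1) → Fin (n + 1) → ℝ)
    (hsym : ∀ i j, f i j = f j i) (hnn : ∀ i j, 0 ≤ f i j)
    (V : Fin (K + 1) → Finset (Fin (n + 1)))
    (hdisj : ∀ k l, k ≠ l → Disjoint (V k) (V l))
    (hcover : ∀ i, ∃ k, i ∈ V k)
    (r : Fin (K + 1) → Fin (n + 1)) (hr : ∀ k, r k ∈ V k) :
    (((lap fun s t : Fin (K + 1) => ∑ i ∈ V s, ∑ j ∈ V t, f i j).submatrix
            Fin.succ Fin.succ).det)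
        * ∏ k, (lapMinor f (V k) (r k)).det
      ≤ ((lap f).submatrix Fin.succ Fin.succ).det := by
  obtain ⟨c, rfl⟩ := exists_eq_filter_of_partition (fun k l => hdisj k l) hcover
  have hroot : Function.LeftInverse c r := fun k => (mem_filter.mp (hr k)).2
  have hf : (of f).IsSymm := .ext fun i j => hsym j i
  have hwithin := posSemidef_weightedLaplacian_withinBlocks c hf hnn
  have hacross := posSemidef_weightedLaplacian_acrossBlocks c hf hnn
  simp only [det_lap_submatrix_succ, det_lapMinor_filter_eq f (hroot _)]
  exact det_minor_ge_supernode_mul_blocks_general (of f) hwithin hacross hroot 0 0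
end

section
/- Suppose there exists $\varepsilon > 0$ such that the edge weights satisfy $f_{st} \le \varepsilon$ whenever $s, t$ lie in different blocks of a partition $(V_1,\ldots,V_K)$ of $[n]$ and $f_{s't'} \ge \varepsilon$ whenever $s', t'$ lie in the same block. Then $\frac{\det(L_n + n^{-1}J)}{\prod_{i=1}^K \det(L_{V_i} + n_i^{-1}J)} \le (n\varepsilon)^{K-1} \prod_{i=1}^K \prod_{j=2}^{n_i} \Big(1 + \frac{(n - n_i)\varepsilon}{\lambda_{ij}}\Big)$, where $\lambda_{ij}$ is the $j$-th smallest eigenvalue of $L_{V_i}$ and $n_i = |V_i|$. -/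
open Matrix Finset

/-- The Laplacian of the induced weighted subgraph on a finset `S`. -/
def lapOn {n : ℕ} (f : Fin n → Fin n → ℝ) (S : Finset (Fin n)) :
    Matrix {x : Fin n // x ∈ S} {x : Fin n // x ∈ S} ℝ :=
  Matrix.of fun a b =>
    if (a : Fin n) = (b : Fin n) then ∑ u ∈ S.erase (a : Fin n), f a u
    else -(f a b)

/-- The all-ones matrix. -/
def Jmat (ι : Type*) : Matrix ι ι ℝ := Matrix.of fun _ _ => 1

/-!
Raising every weight between different blocks to `ε` adds a positive semidefinite Laplacian, so it
can only increase `det (L + n⁻¹J)`. For the raised weights the matrix `L + εJ` is block diagonal,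
with blocks `L_V + (n - #V) ε I + εJ`. The all-ones vector is an eigenvector of every Laplacian, and
adding `cJ` moves its eigenvalue from `0` to `c` times the size of the matrix, keeping all others.
So a block has determinant `n ε ∏ (λ + (n - #V) ε)` over the nonzero eigenvalues `λ` of `L_V`, and
going back from `εJ` to `n⁻¹J` divides the whole determinant by `n ε`.
-/

section RankOne

open Polynomial

variable {ι R : Type*} [Fintype ι] [DecidableEq ι] [CommRing R]
  {A : Matrix ι ι R} {u : ι → R} {a : R}

theorem det_add_vecMulVec_mul_of_mulVec_eq_smul (hu : A *ᵥ u = a • u) (v : ι → R) :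
    (A + vecMulVec u v).det * a = A.det * (a + v ⬝ᵥ u) := by
  -- Column reduction of the bordered matrix, whose Schur complement is `A + vecMulVec u v`.
  have hreduce : fromBlocks A (replicateCol Unit u) (-replicateRow Unit v) 1 *
      fromBlocks 1 (-replicateCol Unit u) 0 (a • 1) =
      fromBlocks A 0 (-replicateRow Unit v) ((a + v ⬝ᵥ u) • 1) := by
    have hcol : A * replicateCol Unit u = a • replicateCol Unit u := by
      rw [← replicateCol_mulVec, hu, replicateCol_smul]
    have hrow : replicateRow Unit v * replicateCol Unit u = (v ⬝ᵥ u) • 1 := by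
      ext; simp [mul_apply, dotProduct]
    simp [fromBlocks_multiply, hcol, hrow, add_smul, add_comm]
  have hdet := congrArg det hreduce
  rw [det_mul, det_fromBlocks_one₂₂, det_fromBlocks_zero₂₁, det_fromBlocks_zero₁₂] at hdet
  simpa [vecMulVec_eq Unit] using hdet

theorem charpoly_add_vecMulVec_mul_of_mulVec_eq_smul (hu : A *ᵥ u = a • u) (v : ι → R) :
    (A + vecMulVec u v).charpoly * (X - C a) = A.charpoly * (X - C (a + v ⬝ᵥ u)) := by
  have hmatrix : (A + vecMulVec u v).charmatrix =
      A.charmatrix + vecMulVec (C ∘ u) (-(C ∘ v)) := by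
    ext i j : 2
    simp [charmatrix, vecMulVec_apply, sub_eq_add_neg, add_assoc, add_comm]
  have hcharmatrix : A.charmatrix *ᵥ (C ∘ u) = (X - C a) • (C ∘ u) := by
    have hmap : C.mapMatrix A *ᵥ (C ∘ u) = C ∘ (A *ᵥ u) :=
      funext fun i => (C.map_mulVec A u i).symm
    rw [charmatrix, sub_mulVec, hmap, hu]
    ext i : 1
    simp [sub_mul]
  rw [charpoly, hmatrix, det_add_vecMulVec_mul_of_mulVec_eq_smul hcharmatrix, charpoly]
  simp [dotProduct, sub_eq_add_neg, add_assoc, add_comm]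

theorem roots_charpoly_add_vecMulVec_of_mulVec_eq_smul [IsDomain R] (hu : A *ᵥ u = a • u)
    (v : ι → R) {M : Multiset R} (hroots : A.charpoly.roots = a ::ₘ M) :
    (A + vecMulVec u v).charpoly.roots = (a + v ⬝ᵥ u) ::ₘ M := by
  have h := congrArg roots (charpoly_add_vecMulVec_mul_of_mulVec_eq_smul hu v)
  rw [roots_mul ((charpoly_monic _).mul (monic_X_sub_C a)).ne_zero,
    roots_mul ((charpoly_monic _).mul (monic_X_sub_C _)).ne_zero, roots_X_sub_C, roots_X_sub_C,
    hroots, Multiset.cons_add, ← Multiset.singleton_add a, add_comm] at h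
  simpa [add_comm M] using add_left_cancel h

end RankOne

section Determinant

theorem det_add_smul_one_eq_prod_roots_charpoly {ι R : Type*} [Fintype ι] [DecidableEq ι]
    [CommRing R] [IsDomain R] {A : Matrix ι ι R} (hA : A.charpoly.Splits) (b : R) :
    (A + b • (1 : Matrix ι ι R)).det = (A.charpoly.roots.map (· + b)).prod := by
  have hneg : A + b • (1 : Matrix ι ι R) = -(scalar ι (-b) - A) := by
    rw [scalar_apply, ← smul_one_eq_diagonal]; simp
  have hcard : Fintype.card ι = (A.charpoly.roots.map (-b - ·)).card := by
    rw [Multiset.card_map, ← hA.natDegree_eq_card_roots, charpoly_natDegree_eq_dim]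
  rw [hneg, det_neg, ← eval_charpoly, hA.eval_eq_prod_roots_of_monic A.charpoly_monic, hcard,
    ← Multiset.prod_map_neg, Multiset.map_map]
  simp [add_comm]

open scoped ComplexOrder

variable {ι 𝕜 : Type*} [Fintype ι] [DecidableEq ι] [RCLike 𝕜] {A P : Matrix ι ι 𝕜}

theorem one_le_det_one_add_of_posSemidef (hP : P.PosSemidef) : 1 ≤ (1 + P).det := by
  have hdet := det_add_smul_one_eq_prod_roots_charpoly hP.1.splits_charpoly 1
  rw [one_smul, add_comm, hP.1.roots_charpoly_eq_eigenvalues, Multiset.map_map] at hdet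
  calc (1 : 𝕜) ≤ ((∏ i, (hP.1.eigenvalues i + 1) : ℝ) : 𝕜) := by
        exact_mod_cast Finset.one_le_prod fun i _ =>
          le_add_of_nonneg_left (hP.eigenvalues_nonneg i)
    _ = (1 + P).det := by rw [hdet]; simp

open scoped MatrixOrder Matrix.Norms.L2Operator in
theorem det_le_det_add_of_posSemidef (hA : A.PosSemidef) (hP : P.PosSemidef) :
    A.det ≤ (A + P).det := by
  by_cases hdet : A.det = 0
  · exact hdet ▸ (hA.add hP).det_nonneg
  have hApos : A.PosDef := hA.posDef_iff_det_ne_zero.2 hdet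
  obtain ⟨C, rfl⟩ : ∃ C : Matrix ι ι 𝕜, P = Cᴴ * C :=
    CStarAlgebra.nonneg_iff_eq_star_mul_self.1 hP.nonneg
  calc A.det ≤ A.det * (1 + C * A⁻¹ * Cᴴ).det :=
        le_mul_of_one_le_right hApos.det_pos.le <|
          one_le_det_one_add_of_posSemidef (hApos.inv.posSemidef.mul_mul_conjTranspose_same C)
    _ = (A + Cᴴ * C).det := by
        rw [det_add_mul _ _ (isUnit_iff_ne_zero.2 hdet)]

theorem det_eq_prod_det_submatrix {ι κ R : Type*} [Fintype ι] [DecidableEq ι] [Fintype κ]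
    [CommRing R] {M : Matrix ι ι R} {b : ι → κ} {V : κ → Finset ι}
    (hV : ∀ s k, s ∈ V k ↔ b s = k) (hM : ∀ s t, b s ≠ b t → M s t = 0) :
    M.det = ∏ k, (M.submatrix ((↑) : V k → ι) (↑)).det := by
  let _ : LinearOrder κ := LinearOrder.lift' (Fintype.equivFin κ) (Equiv.injective _)
  have hblock : M.BlockTriangular b := fun s t hst => hM s t hst.ne'
  rw [hblock.det_fintype]
  refine Finset.prod_congr rfl fun k _ => ?_
  rw [← det_submatrix_equiv_self (Equiv.subtypeEquivRight fun s => hV s k)]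
  rfl

end Determinant

section Laplacian

variable {ι R : Type*} [Fintype ι] [DecidableEq ι]

/-- The Laplacian of the complete graph on `ι` with edge weights `w`. The loop weights `w s s`
cancel on the diagonal. -/
def laplacian [AddCommGroup R] (w : ι → ι → R) : Matrix ι ι R :=
  diagonal (fun s => ∑ t, w s t) - of w

theorem lap_eq_laplacian {n : ℕ} (f : Fin n → Fin n → ℝ) : lap f = laplacian f := by
  ext s t
  by_cases h : s = t
  · subst h; simp [lap, laplacian, sum_erase_eq_sub]
  · simp [lap, laplacian, h]

theorem lapOn_eq_laplacian {n : ℕ} (f : Fin n → Fin n → ℝ) (S : Finset (Fin n)) :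
    lapOn f S = laplacian fun s t : S => f s t := by
  ext s t
  by_cases h : s = t
  · subst h; simp [lapOn, laplacian, sum_erase_eq_sub, ← sum_attach S]
  · simp [lapOn, laplacian, h]

theorem laplacian_add [AddCommGroup R] (w w' : ι → ι → R) :
    laplacian (w + w') = laplacian w + laplacian w' := by
  have hdiag : (fun s => ∑ t, (w + w') s t) = fun s => ∑ t, w s t + ∑ t, w' s t :=
    funext fun s => sum_add_distrib
  rw [laplacian, laplacian, laplacian, hdiag, ← diagonal_add, ← of_add_of, add_sub_add_comm]

theorem laplacian_mulVec [CommRing R] (w : ι → ι → R) (x : ι → R) (s : ι) :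
    (laplacian w *ᵥ x) s = ∑ t, w s t * (x s - x t) := by
  simp only [laplacian, sub_mulVec, Pi.sub_apply, mulVec_diagonal, mul_sub, sum_sub_distrib,
    sum_mul]
  rfl

theorem laplacian_mulVec_one [CommRing R] (w : ι → ι → R) : laplacian w *ᵥ 1 = 0 := by
  ext s; simp [laplacian_mulVec]

theorem isHermitian_laplacian {w : ι → ι → ℝ} (hw : ∀ s t, w s t = w t s) :
    (laplacian w).IsHermitian :=
  (isHermitian_diagonal _).sub (IsHermitian.ext fun s t => hw t s)

theorem two_mul_dotProduct_laplacian_mulVec [CommRing R] {w : ι → ι → R}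
    (hw : ∀ s t, w s t = w t s) (x : ι → R) :
    2 * (x ⬝ᵥ laplacian w *ᵥ x) = ∑ s, ∑ t, w s t * (x s - x t) ^ 2 := by
  have hform : x ⬝ᵥ laplacian w *ᵥ x = ∑ s, ∑ t, w s t * (x s * (x s - x t)) := by
    simp only [dotProduct, laplacian_mulVec, mul_sum, mul_left_comm]
  have hswap : x ⬝ᵥ laplacian w *ᵥ x = ∑ s, ∑ t, w s t * (x t * (x t - x s)) := by
    rw [hform, sum_comm]
    simp only [hw]
  rw [two_mul]
  nth_rw 1 [hform]
  rw [hswap]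
  simp only [← sum_add_distrib, ← mul_add]
  congr! 4
  ring

theorem posSemidef_laplacian {w : ι → ι → ℝ} (hw : ∀ s t, w s t = w t s) (hw0 : 0 ≤ w) :
    (laplacian w).PosSemidef := by
  refine .of_dotProduct_mulVec_nonneg (isHermitian_laplacian hw) fun x => ?_
  have hsum : 0 ≤ ∑ s, ∑ t, w s t * (x s - x t) ^ 2 :=
    sum_nonneg fun s _ => sum_nonneg fun t _ => mul_nonneg (hw0 s t) (sq_nonneg _)
  rw [← two_mul_dotProduct_laplacian_mulVec hw] at hsum
  rw [star_trivial]
  linarith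

end Laplacian

section AllOnes

variable {ι : Type*}

theorem smul_Jmat_eq_vecMulVec (c : ℝ) : c • Jmat ι = vecMulVec 1 (c • 1) := by
  ext; simp [Jmat, vecMulVec_apply]

theorem isHermitian_smul_Jmat (c : ℝ) : (c • Jmat ι).IsHermitian := by
  ext; simp [Jmat]

theorem posSemidef_smul_Jmat [Finite ι] {c : ℝ} (hc : 0 ≤ c) : (c • Jmat ι).PosSemidef := by
  have hJ : Jmat ι = vecMulVec 1 (star 1) := by ext; simp [Jmat, vecMulVec_apply]
  exact hJ ▸ (posSemidef_vecMulVec_self_star (1 : ι → ℝ)).smul hc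

variable [Fintype ι]

theorem Jmat_mulVec_one : Jmat ι *ᵥ 1 = (Fintype.card ι : ℝ) • (1 : ι → ℝ) := by
  ext; simp [Jmat, mulVec, dotProduct]

variable [DecidableEq ι]

theorem posSemidef_laplacian_add_smul_Jmat {w : ι → ι → ℝ} (hw : ∀ s t, w s t = w t s)
    (hw0 : 0 ≤ w) {c : ℝ} (hc : 0 ≤ c) : (laplacian w + c • Jmat ι).PosSemidef :=
  (posSemidef_laplacian hw hw0).add (posSemidef_smul_Jmat hc)

theorem mul_det_laplacian_add_smul_Jmat [Nonempty ι] (w : ι → ι → ℝ) (c d : ℝ) :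
    c * (laplacian w + d • Jmat ι).det = d * (laplacian w + c • Jmat ι).det := by
  have hcard : (Fintype.card ι : ℝ) ≠ 0 := Nat.cast_ne_zero.2 Fintype.card_ne_zero
  have hones : (laplacian w + c • Jmat ι) *ᵥ 1 = (c * Fintype.card ι) • (1 : ι → ℝ) := by
    rw [add_mulVec, laplacian_mulVec_one, smul_mulVec, Jmat_mulVec_one, zero_add, smul_smul]
  have hdet := det_add_vecMulVec_mul_of_mulVec_eq_smul hones ((d - c) • 1)
  rw [← smul_Jmat_eq_vecMulVec, add_assoc, ← add_smul, add_sub_cancel] at hdet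
  apply mul_right_cancel₀ hcard
  rw [smul_dotProduct, one_dotProduct_one, smul_eq_mul] at hdet
  linear_combination hdet

theorem det_laplacian_add_smul_one_add_smul_Jmat {w : ι → ι → ℝ} (hw : ∀ s t, w s t = w t s)
    {M : Multiset ℝ} (hroots : (laplacian w).charpoly.roots = 0 ::ₘ M) (b c : ℝ) :
    (laplacian w + b • (1 : Matrix ι ι ℝ) + c • Jmat ι).det =
      (c * Fintype.card ι + b) * (M.map (· + b)).prod := by
  have hones : laplacian w *ᵥ 1 = (0 : ℝ) • (1 : ι → ℝ) := by simp [laplacian_mulVec_one]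
  have hsplits : (laplacian w + c • Jmat ι).charpoly.Splits :=
    ((isHermitian_laplacian hw).add (isHermitian_smul_Jmat c)).splits_charpoly
  rw [smul_Jmat_eq_vecMulVec] at hsplits
  rw [add_right_comm, smul_Jmat_eq_vecMulVec, det_add_smul_one_eq_prod_roots_charpoly hsplits,
    roots_charpoly_add_vecMulVec_of_mulVec_eq_smul hones _ hroots]
  simp

theorem det_laplacian_add_inv_card_smul_Jmat {w : ι → ι → ℝ} (hw : ∀ s t, w s t = w t s)
    {M : Multiset ℝ} (hroots : (laplacian w).charpoly.roots = 0 ::ₘ M) :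
    (laplacian w + (Fintype.card ι : ℝ)⁻¹ • Jmat ι).det = M.prod := by
  have hcard : (Fintype.card ι : ℝ) ≠ 0 := by
    intro h
    have : IsEmpty ι := Fintype.card_eq_zero_iff.1 (by exact_mod_cast h)
    simp [charpoly] at hroots
  simpa [hcard] using det_laplacian_add_smul_one_add_smul_Jmat hw hroots 0 (Fintype.card ι : ℝ)⁻¹

theorem det_laplacian_add_smul_Jmat_le {w w' : ι → ι → ℝ} (hw : ∀ s t, w s t = w t s)
    (hw' : ∀ s t, w' s t = w' t s) (hw0 : 0 ≤ w) (hle : w ≤ w') {c : ℝ} (hc : 0 ≤ c) :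
    (laplacian w + c • Jmat ι).det ≤ (laplacian w' + c • Jmat ι).det := by
  have hdiff : (laplacian (w' - w)).PosSemidef :=
    posSemidef_laplacian (fun s t => by simp [hw s t, hw' s t]) (sub_nonneg.2 hle)
  have hdet := det_le_det_add_of_posSemidef (posSemidef_laplacian_add_smul_Jmat hw hw0 hc) hdiff
  rwa [add_right_comm, ← laplacian_add, add_sub_cancel] at hdet

end AllOnes

section Blocks

variable {ι κ R : Type*} [DecidableEq κ] {b : ι → κ}

/-- The weights `w` with every weight between different blocks replaced by `ε`, where `b` sends
each vertex to its block. These are the weights for which the theorem is an equality. -/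
def replaceCross (b : ι → κ) (ε : R) (w : ι → ι → R) (s t : ι) : R :=
  if b s = b t then w s t else ε

theorem replaceCross_comm (ε : R) {w : ι → ι → R} (hw : ∀ s t, w s t = w t s) (s t : ι) :
    replaceCross b ε w s t = replaceCross b ε w t s := by
  simp only [replaceCross, hw s t, eq_comm]

theorem le_replaceCross [Preorder R] {ε : R} {w : ι → ι → R}
    (hcross : ∀ s t, b s ≠ b t → w s t ≤ ε) : w ≤ replaceCross b ε w := by
  intro s t
  by_cases h : b s = b t
  · simp [replaceCross, h]
  · simpa [replaceCross, h] using hcross s t h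

variable [Fintype ι] {V : κ → Finset ι}

theorem sum_replaceCross (hV : ∀ s k, s ∈ V k ↔ b s = k) [Ring R] (ε : R) (w : ι → ι → R) {s : ι}
    {k : κ} (hs : s ∈ V k) :
    ∑ t, replaceCross b ε w s t =
      ∑ t : V k, w s t + ((Fintype.card ι : R) - #(V k)) * ε := by
  classical
  have hin : ∑ t ∈ V k, replaceCross b ε w s t = ∑ t ∈ V k, w s t :=
    sum_congr rfl fun t ht => if_pos (((hV s k).1 hs).trans ((hV t k).1 ht).symm)
  have hout : ∑ t ∈ (V k)ᶜ, replaceCross b ε w s t = ∑ _ ∈ (V k)ᶜ, ε :=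
    sum_congr rfl fun t ht => if_neg fun hst =>
      mem_compl.1 ht ((hV t k).2 (hst.symm.trans ((hV s k).1 hs)))
  rw [← sum_add_sum_compl (V k), hin, hout, sum_const, card_compl, nsmul_eq_mul,
    Nat.cast_sub (card_le_univ _), sum_coe_sort (V k) (w s)]

variable [DecidableEq ι]

theorem submatrix_laplacian_replaceCross_add_smul_Jmat (hV : ∀ s k, s ∈ V k ↔ b s = k) (ε : ℝ)
    (w : ι → ι → ℝ) (k : κ) :
    (laplacian (replaceCross b ε w) + ε • Jmat ι).submatrix ((↑) : V k → ι) (↑) =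
      laplacian (fun s t : V k => w s t) +
        (((Fintype.card ι : ℝ) - #(V k)) * ε) • (1 : Matrix (V k) (V k) ℝ) + ε • Jmat (V k) := by
  ext s t
  have hst : b s = b t := ((hV s k).1 s.2).trans ((hV t k).1 t.2).symm
  by_cases h : s = t
  · subst h
    have hdiag : replaceCross b ε w s s = w s s := if_pos rfl
    simp only [laplacian, Jmat, submatrix_apply, Matrix.add_apply, Matrix.sub_apply,
      Matrix.smul_apply, diagonal_apply_eq, one_apply_eq, of_apply, smul_eq_mul, hdiag,
      sum_replaceCross hV ε w s.2]
    ring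
  · simp [laplacian, Jmat, h, replaceCross, hst]

variable [Fintype κ]

theorem det_laplacian_replaceCross_add_smul_Jmat (hV : ∀ s k, s ∈ V k ↔ b s = k) (ε : ℝ)
    {w : ι → ι → ℝ} (hw : ∀ s t, w s t = w t s) {eig : κ → Multiset ℝ}
    (hroots : ∀ k, (laplacian fun s t : V k => w s t).charpoly.roots = 0 ::ₘ eig k) :
    (laplacian (replaceCross b ε w) + ε • Jmat ι).det =
      ((Fintype.card ι : ℝ) * ε) ^ Fintype.card κ *
        ∏ k, ((eig k).map (· + ((Fintype.card ι : ℝ) - #(V k)) * ε)).prod := by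
  have hcross (s t : ι) (hst : b s ≠ b t) :
      (laplacian (replaceCross b ε w) + ε • Jmat ι) s t = 0 := by
    simp [laplacian, Jmat, replaceCross, hst, ne_of_apply_ne b hst]
  have hblock (k : κ) := det_laplacian_add_smul_one_add_smul_Jmat
    (fun s t : V k => hw s t) (hroots k) (((Fintype.card ι : ℝ) - #(V k)) * ε) ε
  rw [det_eq_prod_det_submatrix hV hcross]
  simp only [submatrix_laplacian_replaceCross_add_smul_Jmat hV, hblock, prod_mul_distrib,
    Fintype.card_coe, mul_comm ε, ← add_mul, add_sub_cancel,
    prod_const ((Fintype.card ι : ℝ) * ε), card_univ]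

theorem det_laplacian_replaceCross_add_inv_card_smul_Jmat [Nonempty ι]
    (hV : ∀ s k, s ∈ V k ↔ b s = k) {ε : ℝ} (hε : ε ≠ 0) {w : ι → ι → ℝ}
    (hw : ∀ s t, w s t = w t s) {eig : κ → Multiset ℝ}
    (hroots : ∀ k, (laplacian fun s t : V k => w s t).charpoly.roots = 0 ::ₘ eig k) :
    (laplacian (replaceCross b ε w) + (Fintype.card ι : ℝ)⁻¹ • Jmat ι).det =
      ((Fintype.card ι : ℝ) * ε) ^ (Fintype.card κ - 1) *
        ∏ k, ((eig k).map (· + ((Fintype.card ι : ℝ) - #(V k)) * ε)).prod := by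
  have hn : (Fintype.card ι : ℝ) ≠ 0 := Nat.cast_ne_zero.2 Fintype.card_ne_zero
  have : Nonempty κ := .map b ‹_›
  have hdet := mul_det_laplacian_add_smul_Jmat (replaceCross b ε w) ε (Fintype.card ι : ℝ)⁻¹
  rw [eq_inv_mul_iff_mul_eq₀ hn, ← mul_assoc,
    det_laplacian_replaceCross_add_smul_Jmat hV ε hw hroots,
    ← mul_pow_sub_one Fintype.card_ne_zero, mul_assoc (_ * ε)] at hdet
  exact mul_left_cancel₀ (mul_ne_zero hn hε) hdet

end Blocks

theorem exists_forall_mem_iff_eq {ι κ : Type*} {V : κ → Finset ι}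
    (hdisj : Pairwise (Function.onFun Disjoint V)) (hcover : ∀ s, ∃ k, s ∈ V k) :
    ∃ b : ι → κ, ∀ s k, s ∈ V k ↔ b s = k := by
  choose b hb using hcover
  refine ⟨b, fun s k => ⟨fun hs => ?_, fun hk => hk ▸ hb s⟩⟩
  by_contra hne
  exact disjoint_left.1 (hdisj hne) (hb s) hs

theorem univ_val_map_eq_cons_map_filter {α : Type*} {m : ℕ} (hm : 0 < m) {lam : Fin m → α} {a : α}
    (ha : ∀ j : Fin m, (j : ℕ) = 0 → lam j = a) :
    univ.val.map lam = a ::ₘ (univ.filter fun j : Fin m => (j : ℕ) ≠ 0).val.map lam := by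
  have hfilter : (univ.filter fun j : Fin m => (j : ℕ) ≠ 0) = univ.erase ⟨0, hm⟩ := by
    ext j; simp [Fin.ext_iff]
  rw [hfilter, ← ha ⟨0, hm⟩ rfl, ← Multiset.map_cons, erase_val, Multiset.cons_erase (mem_univ _)]

theorem prod_map_one_add_div_mul_prod {K : Type*} [Field K] {M : Multiset K} (hM : 0 ∉ M) (b : K) :
    (M.map fun μ => 1 + b / μ).prod * M.prod = (M.map (· + b)).prod := by
  nth_rw 2 [← M.map_id']
  rw [← Multiset.prod_map_mul]
  refine congrArg _ (Multiset.map_congr rfl fun μ hμ => ?_)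
  have hμ0 : μ ≠ 0 := fun h => hM (h ▸ hμ)
  field_simp

theorem ratio_det_full_le_general {ι κ : Type*} [Fintype ι] [DecidableEq ι] [Nonempty ι]
    [Fintype κ] {ε : ℝ} (hε : 0 < ε) {w : ι → ι → ℝ} (hsymm : ∀ s t, w s t = w t s)
    (hnn : ∀ s t, 0 ≤ w s t) {V : κ → Finset ι} (hdisj : Pairwise (Function.onFun Disjoint V))
    (hcover : ∀ s, ∃ k, s ∈ V k)
    (hcross : ∀ s t k l, k ≠ l → s ∈ V k → t ∈ V l → w s t ≤ ε)
    {eig : κ → Multiset ℝ}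
    (hroots : ∀ k, (laplacian fun s t : V k => w s t).charpoly.roots = 0 ::ₘ eig k)
    (hconn : ∀ k, 0 ∉ eig k) :
    (laplacian w + (Fintype.card ι : ℝ)⁻¹ • Jmat ι).det /
        ∏ k, (laplacian (fun s t : V k => w s t) + (#(V k) : ℝ)⁻¹ • Jmat (V k)).det ≤
      ((Fintype.card ι : ℝ) * ε) ^ (Fintype.card κ - 1) *
        ∏ k, ((eig k).map fun μ => 1 + ((Fintype.card ι : ℝ) - #(V k)) * ε / μ).prod := by
  classical
  obtain ⟨b, hV⟩ := exists_forall_mem_iff_eq hdisj hcover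
  have hblock (k : κ) :
      (laplacian (fun s t : V k => w s t) + (#(V k) : ℝ)⁻¹ • Jmat (V k)).det = (eig k).prod := by
    simpa using det_laplacian_add_inv_card_smul_Jmat (fun s t : V k => hsymm s t) (hroots k)
  have heig (k : κ) : 0 < (eig k).prod := by
    refine (Multiset.prod_ne_zero (hconn k)).symm.lt_of_le ?_
    rw [← hblock]
    exact (posSemidef_laplacian_add_smul_Jmat (fun s t : V k => hsymm s t)
      (fun s t => hnn s t) (by positivity)).det_nonneg
  have hle : w ≤ replaceCross b ε w := le_replaceCross fun s t hst =>
    hcross s t _ _ hst ((hV s _).2 rfl) ((hV t _).2 rfl)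
  simp only [hblock]
  rw [div_le_iff₀ (prod_pos fun k _ => heig k), mul_assoc, ← prod_mul_distrib]
  simp only [prod_map_one_add_div_mul_prod (hconn _)]
  calc (laplacian w + (Fintype.card ι : ℝ)⁻¹ • Jmat ι).det
      ≤ (laplacian (replaceCross b ε w) + (Fintype.card ι : ℝ)⁻¹ • Jmat ι).det :=
        det_laplacian_add_smul_Jmat_le hsymm (replaceCross_comm ε hsymm) hnn hle (by positivity)
    _ = _ := det_laplacian_replaceCross_add_inv_card_smul_Jmat hV hε.ne' hsymm hroots

/-- if cross-block weights are `≤ ε` and within-block weights are `≥ ε`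
for a partition `(V i)` of `[n]` (each block inducing a connected graph, so its
Laplacian eigenvalues `lam i j` are positive for `j ≥ 2`), then
`det (Lₙ + n⁻¹J) / ∏ i det (L_{V i} + n_i⁻¹J)
  ≤ (n ε)^(K-1) ∏ i ∏_{j ≥ 2} (1 + (n - n_i) ε / lam i j)`. -/
theorem ratio_det_full_le {n K : ℕ} (hn : 0 < n) (hK : 0 < K)
    (ε : ℝ) (hε : 0 < ε) (f : Fin n → Fin n → ℝ)
    (hsym : ∀ s t, f s t = f t s) (hnn : ∀ s t, 0 ≤ f s t)
    (V : Fin K → Finset (Fin n))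
    (hdisj : ∀ k l, k ≠ l → Disjoint (V k) (V l))
    (hcover : ∀ i, ∃ k, i ∈ V k)
    (hne : ∀ k, (V k).Nonempty)
    (hcross : ∀ (s t : Fin n) (k l : Fin K), k ≠ l → s ∈ V k → t ∈ V l → f s t ≤ ε)
    (hwithin : ∀ (s t : Fin n) (k : Fin K), s ∈ V k → t ∈ V k → s ≠ t → ε ≤ f s t)
    (lam : (k : Fin K) → Fin (V k).card → ℝ)
    (hmono : ∀ k, Monotone (lam k))
    (hzero : ∀ (k : Fin K) (j : Fin (V k).card), (j : ℕ) = 0 → lam k j = 0)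
    (hpos : ∀ (k : Fin K) (j : Fin (V k).card), (j : ℕ) ≠ 0 → 0 < lam k j)
    (hroots : ∀ k,
      ((lapOn f (V k)).charpoly).roots = Multiset.map (lam k) Finset.univ.val) :
    (lap f + ((n : ℝ))⁻¹ • Jmat (Fin n)).det /
        (∏ k, (lapOn f (V k) + (((V k).card : ℝ))⁻¹ • Jmat _).det)
      ≤ ((n : ℝ) * ε) ^ (K - 1) *
          ∏ k, ∏ j ∈ Finset.univ.filter (fun j : Fin (V k).card => (j : ℕ) ≠ 0),
            (1 + ((n : ℝ) - ((V k).card : ℝ)) * ε / lam k j) := by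
  have : NeZero n := ⟨hn.ne'⟩
  have hroots' (k : Fin K) := lapOn_eq_laplacian f (V k) ▸ (hroots k).trans
    (univ_val_map_eq_cons_map_filter (card_pos.2 (hne k)) (hzero k))
  simpa [lap_eq_laplacian, lapOn_eq_laplacian, Finset.prod] using
    ratio_det_full_le_general hε hsym hnn (fun k l => hdisj k l) hcover hcross hroots' (by
      simpa using fun k j hj => (hpos k j (by simpa using hj)).ne')
end
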